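/- Type preservation of the CBN translation of the comonadic linear λ-calculus: if Γ ⊢_com e : τ, then ⟦Γ⟧n ⊢ ⟦e⟧n : ⟦τ⟧n in CBPV with coeffects. -/

import Mathlib

set_option autoImplicit false

/-- A preordered semiring of grades `(Q, +, 0, ·, 1, ≤co)`,
where `≤co` is a preorder respected by `+` and `·`. -/
structure CoSig (Q : Type) where
  add : Q → Q → Q
  zero : Q
  mul : Q → Q → Q
  one : Q
  le : Q → Q → Prop
  add_assoc : ∀ a b c, add (add a b) c = add a (add b c)
  add_comm : ∀ a b, add a b = add b a
  add_zero : ∀ a, add a zero = a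
  mul_assoc : ∀ a b c, mul (mul a b) c = mul a (mul b c)
  one_mul : ∀ a, mul one a = a
  mul_one : ∀ a, mul a one = a
  zero_mul : ∀ a, mul zero a = zero
  mul_zero : ∀ a, mul a zero = zero
  left_distrib : ∀ a b c, mul a (add b c) = add (mul a b) (mul a c)
  right_distrib : ∀ a b c, mul (add a b) c = add (mul a c) (mul b c)
  le_refl : ∀ a, le a a
  le_trans : ∀ a b c, le a b → le b c → le a c
  add_le_add : ∀ a b c d, le a b → le c d → le (add a c) (add b d)
  mul_le_mul : ∀ a b c d, le a b → le c d → le (mul a c) (mul b d)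

namespace CBPVCo

/-- Pointwise comparison of grade vectors: `γ₁ ≤co γ₂`. -/
def vle {Q : Type} (S : CoSig Q) (γ₁ γ₂ : List Q) : Prop := List.Forall₂ S.le γ₁ γ₂

/-- Pointwise addition of grade vectors. -/
def vadd {Q : Type} (S : CoSig Q) (γ₁ γ₂ : List Q) : List Q := List.zipWith S.add γ₁ γ₂

/-- Pointwise scaling of a grade vector: `q·γ`. -/
def vscale {Q : Type} (S : CoSig Q) (q : Q) (γ : List Q) : List Q := γ.map (S.mul q)

/-- `γ ≤co 0̄`: every entry of the grade vector is discardable. -/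
def leZero {Q : Type} (S : CoSig Q) (γ : List Q) : Prop := ∀ q ∈ γ, S.le q S.zero

mutual
/-- CBPV value types (coeffect version): `unit`, thunks `U B`, positive products. -/
inductive VTy (Q : Type) : Type where
  | unit : VTy Q
  | thunk : CTy Q → VTy Q
  | prod : VTy Q → VTy Q → VTy Q
/-- CBPV computation types (coeffect version): graded functions `A^q → B`,
graded returners `F_q A`, negative products. -/
inductive CTy (Q : Type) : Type where
  | arr : VTy Q → Q → CTy Q → CTy Q
  | F : Q → VTy Q → CTy Q
  | wth : CTy Q → CTy Q → CTy Q
end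

mutual
/-- CBPV values (de Bruijn indices for variables). -/
inductive Val (Q : Type) : Type where
  | var : Nat → Val Q
  | unit : Val Q
  | thunk : Comp Q → Val Q
  | pair : Val Q → Val Q → Val Q
/-- CBPV computations, with grade annotations on binders and on `return`. -/
inductive Comp (Q : Type) : Type where
  | lam : Q → Comp Q → Comp Q
  | app : Comp Q → Val Q → Comp Q
  | force : Val Q → Comp Q
  | split : Q → Val Q → Comp Q → Comp Q
  | cpair : Comp Q → Comp Q → Comp Q
  | fst : Comp Q → Comp Q
  | snd : Comp Q → Comp Q
  | ret : Q → Val Q → Comp Q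
  | letin : Q → Comp Q → Comp Q → Comp Q
end

mutual
/-- The value typing judgment `γ·Γ ⊢ V : A` of the CBPV type-and-coeffect system. -/
inductive VHasTy {Q : Type} (S : CoSig Q) : List Q → List (VTy Q) → Val Q → VTy Q → Prop where
  | var : ∀ {γ : List Q} {Γ : List (VTy Q)} {x : Nat} {q : Q} {A : VTy Q},
      γ.length = Γ.length → Γ[x]? = some A → γ[x]? = some q → S.le q S.one →
      (∀ (i : Nat) (q' : Q), i ≠ x → γ[i]? = some q' → S.le q' S.zero) →
      VHasTy S γ Γ (.var x) A
  | unit : ∀ {γ : List Q} {Γ : List (VTy Q)},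
      γ.length = Γ.length → leZero S γ → VHasTy S γ Γ .unit .unit
  | thunk : ∀ {γ : List Q} {Γ : List (VTy Q)} {M : Comp Q} {B : CTy Q},
      CHasTy S γ Γ M B → VHasTy S γ Γ (.thunk M) (.thunk B)
  | pair : ∀ {γ γ₁ γ₂ : List Q} {Γ : List (VTy Q)} {V₁ V₂ : Val Q} {A₁ A₂ : VTy Q},
      VHasTy S γ₁ Γ V₁ A₁ → VHasTy S γ₂ Γ V₂ A₂ → vle S γ (vadd S γ₁ γ₂) →
      VHasTy S γ Γ (.pair V₁ V₂) (.prod A₁ A₂)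

/-- The computation typing judgment `γ·Γ ⊢ M : B` of the CBPV type-and-coeffect system. -/
inductive CHasTy {Q : Type} (S : CoSig Q) : List Q → List (VTy Q) → Comp Q → CTy Q → Prop where
  | lam : ∀ {γ : List Q} {Γ : List (VTy Q)} {q : Q} {A : VTy Q} {M : Comp Q} {B : CTy Q},
      CHasTy S (q :: γ) (A :: Γ) M B → CHasTy S γ Γ (.lam q M) (.arr A q B)
  | app : ∀ {γ γ₁ γ₂ : List Q} {Γ : List (VTy Q)} {M : Comp Q} {V : Val Q}
      {A : VTy Q} {q : Q} {B : CTy Q},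
      CHasTy S γ₁ Γ M (.arr A q B) → VHasTy S γ₂ Γ V A →
      vle S γ (vadd S γ₁ (vscale S q γ₂)) → CHasTy S γ Γ (.app M V) B
  | force : ∀ {γ : List Q} {Γ : List (VTy Q)} {V : Val Q} {B : CTy Q},
      VHasTy S γ Γ V (.thunk B) → CHasTy S γ Γ (.force V) B
  | ret : ∀ {γ γ₁ : List Q} {Γ : List (VTy Q)} {q : Q} {V : Val Q} {A : VTy Q},
      VHasTy S γ₁ Γ V A → vle S γ (vscale S q γ₁) → CHasTy S γ Γ (.ret q V) (.F q A)
  | letin : ∀ {γ γ₁ γ₂ : List Q} {Γ : List (VTy Q)} {q₁ q₂ : Q} {M N : Comp Q}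
      {A : VTy Q} {B : CTy Q},
      CHasTy S γ₁ Γ M (.F q₁ A) → CHasTy S (S.mul q₁ q₂ :: γ₂) (A :: Γ) N B →
      vle S γ (vadd S (vscale S q₂ γ₁) γ₂) → CHasTy S γ Γ (.letin q₂ M N) B
  | split : ∀ {γ γ₁ γ₂ : List Q} {Γ : List (VTy Q)} {q : Q} {V : Val Q}
      {A₁ A₂ : VTy Q} {N : Comp Q} {B : CTy Q},
      VHasTy S γ₁ Γ V (.prod A₁ A₂) → CHasTy S (q :: q :: γ₂) (A₂ :: A₁ :: Γ) N B →
      vle S γ (vadd S (vscale S q γ₁) γ₂) → CHasTy S γ Γ (.split q V N) B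
  | cpair : ∀ {γ : List Q} {Γ : List (VTy Q)} {M₁ M₂ : Comp Q} {B₁ B₂ : CTy Q},
      CHasTy S γ Γ M₁ B₁ → CHasTy S γ Γ M₂ B₂ → CHasTy S γ Γ (.cpair M₁ M₂) (.wth B₁ B₂)
  | fst : ∀ {γ : List Q} {Γ : List (VTy Q)} {M : Comp Q} {B₁ B₂ : CTy Q},
      CHasTy S γ Γ M (.wth B₁ B₂) → CHasTy S γ Γ (.fst M) B₁
  | snd : ∀ {γ : List Q} {Γ : List (VTy Q)} {M : Comp Q} {B₁ B₂ : CTy Q},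
      CHasTy S γ Γ M (.wth B₁ B₂) → CHasTy S γ Γ (.snd M) B₂
end

/-- Lifting a de Bruijn renaming under one binder. -/
def liftRen (f : Nat → Nat) : Nat → Nat
  | 0 => 0
  | n + 1 => f n + 1

mutual
/-- Renaming of values. -/
def Val.rename {Q : Type} : Val Q → (Nat → Nat) → Val Q
  | .var x, f => .var (f x)
  | .unit, _ => .unit
  | .thunk M, f => .thunk (M.rename f)
  | .pair V₁ V₂, f => .pair (V₁.rename f) (V₂.rename f)
/-- Renaming of computations. -/
def Comp.rename {Q : Type} : Comp Q → (Nat → Nat) → Comp Q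
  | .lam q M, f => .lam q (M.rename (liftRen f))
  | .app M V, f => .app (M.rename f) (V.rename f)
  | .force V, f => .force (V.rename f)
  | .split q V N, f => .split q (V.rename f) (N.rename (liftRen (liftRen f)))
  | .cpair M₁ M₂, f => .cpair (M₁.rename f) (M₂.rename f)
  | .fst M, f => .fst (M.rename f)
  | .snd M, f => .snd (M.rename f)
  | .ret q V, f => .ret q (V.rename f)
  | .letin q M N, f => .letin q (M.rename f) (N.rename (liftRen f))
end

/-- Weakening: shift all free variables up by one. -/
def shift {Q : Type} (M : Comp Q) : Comp Q := M.rename Nat.succ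

/-- Weakening under one binder. -/
def shift1 {Q : Type} (M : Comp Q) : Comp Q := M.rename (liftRen Nat.succ)

/-- Weakening under two binders. -/
def shift2 {Q : Type} (M : Comp Q) : Comp Q := M.rename (liftRen (liftRen Nat.succ))

end CBPVCo

namespace LamCom

/-- Types of the comonadic linear λ-calculus: `unit`, linear functions `τ₁ ⊸ τ₂`,
and the graded comonadic type `□_q τ`. -/
inductive LTy (Q : Type) : Type where
  | unit : LTy Q
  | lolli : LTy Q → LTy Q → LTy Q
  | box : Q → LTy Q → LTy Q

/-- Terms of the comonadic linear λ-calculus (de Bruijn indices);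
`extend q q₁ e₁ e₂` is `extend_q x^{q₁} = e₁ in e₂`,
`divide q₁ q₂ e₁ e₂` is `divide x₁^{q₁}, x₂^{q₂} = e₁ in e₂`. -/
inductive LTm (Q : Type) : Type where
  | var : Nat → LTm Q
  | lam : LTm Q → LTm Q
  | app : LTm Q → LTm Q → LTm Q
  | unit : LTm Q
  | extract : LTm Q → LTm Q
  | extend : Q → Q → LTm Q → LTm Q → LTm Q
  | divide : Q → Q → LTm Q → LTm Q → LTm Q
  | discard : LTm Q → LTm Q → LTm Q

/-- Linear contexts: a position is `some τ` if the resource is available to the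
term at hand and `none` if it is used elsewhere. -/
abbrev LCtx (Q : Type) := List (Option (LTy Q))

/-- Linear splitting of a context between two subterms. -/
inductive Split {Q : Type} : LCtx Q → LCtx Q → LCtx Q → Prop where
  | nil : Split [] [] []
  | left : ∀ {Γ Γ₁ Γ₂ : LCtx Q} {τ : LTy Q},
      Split Γ Γ₁ Γ₂ → Split (some τ :: Γ) (some τ :: Γ₁) (none :: Γ₂)
  | right : ∀ {Γ Γ₁ Γ₂ : LCtx Q} {τ : LTy Q},
      Split Γ Γ₁ Γ₂ → Split (some τ :: Γ) (none :: Γ₁) (some τ :: Γ₂)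
  | none : ∀ {Γ Γ₁ Γ₂ : LCtx Q},
      Split Γ Γ₁ Γ₂ → Split (none :: Γ) (none :: Γ₁) (none :: Γ₂)

/-- The typing judgment `Γ ⊢_com e : τ` of the comonadic linear λ-calculus. -/
inductive HasTy {Q : Type} (S : CoSig Q) : LCtx Q → LTm Q → LTy Q → Prop where
  | var : ∀ {Γ : LCtx Q} {x : Nat} {τ : LTy Q},
      Γ[x]? = some (some τ) →
      (∀ (i : Nat) (o : Option (LTy Q)), i ≠ x → Γ[i]? = some o → o = none) →
      HasTy S Γ (.var x) τ
  | lam : ∀ {Γ : LCtx Q} {e : LTm Q} {τ₁ τ₂ : LTy Q},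
      HasTy S (some τ₁ :: Γ) e τ₂ → HasTy S Γ (.lam e) (.lolli τ₁ τ₂)
  | app : ∀ {Γ Γ₁ Γ₂ : LCtx Q} {e₁ e₂ : LTm Q} {τ₁ τ₂ : LTy Q},
      Split Γ Γ₁ Γ₂ → HasTy S Γ₁ e₁ (.lolli τ₁ τ₂) → HasTy S Γ₂ e₂ τ₁ →
      HasTy S Γ (.app e₁ e₂) τ₂
  | unit : ∀ {Γ : LCtx Q}, (∀ o ∈ Γ, o = none) → HasTy S Γ .unit .unit
  | extract : ∀ {Γ : LCtx Q} {e : LTm Q} {q : Q} {τ : LTy Q},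
      HasTy S Γ e (.box q τ) → S.le q S.one → HasTy S Γ (.extract e) τ
  | extend : ∀ {Γ : LCtx Q} {q q₁ q₁' : Q} {e₁ e₂ : LTm Q} {τ₁ τ₂ : LTy Q},
      HasTy S Γ e₁ (.box q₁' τ₁) → S.le q₁' (S.mul q q₁) →
      HasTy S (some (.box q₁ τ₁) :: Γ.map (fun _ => none)) e₂ τ₂ →
      HasTy S Γ (.extend q q₁ e₁ e₂) (.box q τ₂)
  | divide : ∀ {Γ Γ₁ Γ₂ : LCtx Q} {q q₁ q₂ : Q} {e₁ e₂ : LTm Q} {τ₁ τ₂ : LTy Q},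
      Split Γ Γ₁ Γ₂ → HasTy S Γ₁ e₁ (.box q τ₁) → S.le q (S.add q₁ q₂) →
      HasTy S (some (.box q₂ τ₁) :: some (.box q₁ τ₁) :: Γ₂) e₂ τ₂ →
      HasTy S Γ (.divide q₁ q₂ e₁ e₂) τ₂
  | discard : ∀ {Γ Γ₁ Γ₂ : LCtx Q} {q : Q} {e₁ e₂ : LTm Q} {τ₁ τ₂ : LTy Q},
      Split Γ Γ₁ Γ₂ → HasTy S Γ₁ e₁ (.box q τ₁) → S.le q S.zero →
      HasTy S Γ₂ e₂ τ₂ → HasTy S Γ (.discard e₁ e₂) τ₂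

end LamCom

open CBPVCo LamCom

/-- CBN translation of comonadic-linear source types into CBPV computation
types; the graded comonadic type is translated as `⟦□_q τ⟧n = F_q (U ⟦τ⟧n)`. -/
def tyTransN {Q : Type} (S : CoSig Q) : LTy Q → CTy Q
  | .unit => .F S.one .unit
  | .lolli τ₁ τ₂ => .arr (.thunk (tyTransN S τ₁)) S.one (tyTransN S τ₂)
  | .box q τ => .F q (.thunk (tyTransN S τ))

/-- CBN translation of comonadic-linear source terms into CBPV computations. -/
def tmTransN {Q : Type} (S : CoSig Q) : LTm Q → Comp Q
  | .var x => .force (.var x)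
  | .lam e => .lam S.one (tmTransN S e)
  | .app e₁ e₂ => .app (tmTransN S e₁) (.thunk (tmTransN S e₂))
  | .unit => .ret S.one .unit
  | .extract e => .letin S.one (tmTransN S e) (.force (.var 0))
  | .extend q q₁ e₁ e₂ =>
      .letin S.one (tmTransN S e₁)
        (.ret q (.thunk (.letin S.one (.ret S.one (.thunk (.ret q₁ (.var 0))))
          (shift1 (tmTransN S e₂)))))
  | .divide q₁ q₂ e₁ e₂ =>
      .letin S.one (tmTransN S e₁)
        (.letin S.one (.ret S.one (.thunk (.ret q₁ (.var 0))))
          (.letin S.one (.ret S.one (.thunk (.ret q₂ (.var 1))))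
            (shift2 (tmTransN S e₂))))
  | .discard e₁ e₂ => .letin S.one (tmTransN S e₁) (shift (tmTransN S e₂))

/-- Translation of context entries: a live assumption `x : τ` becomes
`x :^1 U ⟦τ⟧n`; a consumed position becomes a discardable dummy assumption
of grade `0`. -/
def ctxGrade {Q : Type} (S : CoSig Q) : Option (LTy Q) → Q
  | none => S.zero
  | some _ => S.one

def ctxTyN {Q : Type} (S : CoSig Q) : Option (LTy Q) → VTy Q
  | none => .unit
  | some τ => .thunk (tyTransN S τ)

/-!
Induction on the source derivation, with one derived CBPV rule per source construct. A linear
assumption consumed elsewhere stays in the de Bruijn context as a grade-`0` position, so the two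
branches of a context split disagree about the types at their dead positions. The induction
therefore ranges over all target contexts that are correct at the live positions only.

The rules for `extend` and `divide` rest on `x ←^1 return_1 {return_q V} in N`, which spends `q`
times the resources of `V` to make `x : U (F_q A)` available once.
-/

theorem CoSig.zero_add {Q : Type} (S : CoSig Q) (a : Q) : S.add S.zero a = a := by
  rw [S.add_comm, S.add_zero]

theorem forall₂_exists_getElem?_left {α β : Type*} {R : α → β → Prop} {l₁ : List α} {l₂ : List β}
    (h : List.Forall₂ R l₁ l₂) {i : ℕ} {b : β} (hb : l₂[i]? = some b) :
    ∃ a, l₁[i]? = some a ∧ R a b := by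
  obtain ⟨hi, rfl⟩ := List.getElem?_eq_some_iff.1 hb
  have hi' : i < l₁.length := h.length_eq ▸ hi
  exact ⟨l₁[i], List.getElem?_eq_getElem hi', h.get hi' hi⟩

theorem forall₂_exists_getElem?_right {α β : Type*} {R : α → β → Prop} {l₁ : List α} {l₂ : List β}
    (h : List.Forall₂ R l₁ l₂) {i : ℕ} {a : α} (ha : l₁[i]? = some a) :
    ∃ b, l₂[i]? = some b ∧ R a b :=
  forall₂_exists_getElem?_left (R := flip R) h.flip ha

theorem forall₂_insertIdx {α β : Type*} {R : α → β → Prop} {l₁ : List α} {l₂ : List β}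
    (h : List.Forall₂ R l₁ l₂) (n : ℕ) {a : α} {b : β} (hab : R a b) :
    List.Forall₂ R (l₁.insertIdx n a) (l₂.insertIdx n b) := by
  induction n generalizing l₁ l₂ with
  | zero => exact .cons hab h
  | succ n ih =>
    cases h with
    | nil => exact .nil
    | cons hd tl => exact .cons hd (ih tl)

namespace CBPVCo

variable {Q : Type} {S : CoSig Q}

section GradeVectors

theorem vle_refl (γ : List Q) : vle S γ γ :=
  List.forall₂_same.2 fun q _ => S.le_refl q

theorem vle_of_eq {γ₁ γ₂ : List Q} (h : γ₁ = γ₂) : vle S γ₁ γ₂ :=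
  h ▸ vle_refl γ₁

theorem vle.trans {γ₁ γ₂ γ₃ : List Q} (h₁ : vle S γ₁ γ₂) (h₂ : vle S γ₂ γ₃) : vle S γ₁ γ₃ := by
  unfold vle at *
  induction h₁ generalizing γ₃ with
  | nil => exact h₂
  | cons hd _ ih =>
    cases h₂ with
    | cons hd' tl' => exact .cons (S.le_trans _ _ _ hd hd') (ih tl')

theorem leZero.of_vle {γ₁ γ₂ : List Q} (h₂ : leZero S γ₂) (h : vle S γ₁ γ₂) : leZero S γ₁ := by
  intro q₁ hq₁
  obtain ⟨i, hi⟩ := List.mem_iff_getElem?.1 hq₁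
  obtain ⟨q₂, hq₂, hle⟩ := forall₂_exists_getElem?_right h hi
  exact S.le_trans _ _ _ hle (h₂ q₂ (List.mem_of_getElem? hq₂))

theorem vscale_cons (q p : Q) (γ : List Q) :
    vscale S q (p :: γ) = S.mul q p :: vscale S q γ :=
  rfl

theorem vadd_cons_cons (p q : Q) (γ₁ γ₂ : List Q) :
    vadd S (p :: γ₁) (q :: γ₂) = S.add p q :: vadd S γ₁ γ₂ :=
  rfl

theorem length_vscale (q : Q) (γ : List Q) : (vscale S q γ).length = γ.length :=
  List.length_map _

theorem length_vadd {n : ℕ} {γ₁ γ₂ : List Q} (h₁ : γ₁.length = n) (h₂ : γ₂.length = n) :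
    (vadd S γ₁ γ₂).length = n := by
  rw [vadd, List.length_zipWith, h₁, h₂, min_self]

theorem vscale_one (γ : List Q) : vscale S S.one γ = γ :=
  (List.map_congr_left fun q _ => S.one_mul q).trans (List.map_id' γ)

/-- The zero grade vector `0̄` of length `n`. -/
abbrev zeroVec (S : CoSig Q) (n : ℕ) : List Q := List.replicate n S.zero

theorem vscale_zeroVec (q : Q) (n : ℕ) : vscale S q (zeroVec S n) = zeroVec S n := by
  rw [vscale, List.map_replicate, S.mul_zero]

theorem vadd_zeroVec {γ : List Q} {n : ℕ} (h : γ.length = n) : vadd S γ (zeroVec S n) = γ := by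
  subst h
  induction γ with
  | nil => rfl
  | cons q γ ih =>
    rw [List.length_cons, zeroVec, List.replicate_succ, vadd_cons_cons, S.add_zero, ih]

theorem zeroVec_vadd {γ : List Q} {n : ℕ} (h : γ.length = n) : vadd S (zeroVec S n) γ = γ := by
  rw [vadd, List.zipWith_comm_of_comm S.add_comm]
  exact vadd_zeroVec h

theorem vscale_insertIdx_zero (q : Q) (n : ℕ) (γ : List Q) :
    vscale S q (γ.insertIdx n S.zero) = (vscale S q γ).insertIdx n S.zero := by
  rw [vscale, List.map_insertIdx, S.mul_zero, vscale]

theorem vadd_insertIdx_zero (n : ℕ) (γ₁ γ₂ : List Q) :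
    vadd S (γ₁.insertIdx n S.zero) (γ₂.insertIdx n S.zero) =
      (vadd S γ₁ γ₂).insertIdx n S.zero := by
  induction n generalizing γ₁ γ₂ with
  | zero => simp only [vadd, List.insertIdx_zero, List.zipWith_cons_cons, S.add_zero]
  | succ n ih => cases γ₁ <;> cases γ₂ <;> simp_all [vadd]

theorem vle.insertIdx_zero {γ₁ γ₂ : List Q} (h : vle S γ₁ γ₂) (n : ℕ) :
    vle S (γ₁.insertIdx n S.zero) (γ₂.insertIdx n S.zero) :=
  forall₂_insertIdx h n (S.le_refl _)

end GradeVectors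

section Subcoeffecting

mutual

theorem VHasTy.length_eq {γ : List Q} {Γ : List (VTy Q)} {V : Val Q} {A : VTy Q}
    (h : VHasTy S γ Γ V A) : γ.length = Γ.length := by
  cases h with
  | var hlen | unit hlen => exact hlen
  | thunk hM => exact hM.length_eq
  | pair h₁ h₂ hle => exact hle.length_eq.trans (length_vadd h₁.length_eq h₂.length_eq)

theorem CHasTy.length_eq {γ : List Q} {Γ : List (VTy Q)} {M : Comp Q} {B : CTy Q}
    (h : CHasTy S γ Γ M B) : γ.length = Γ.length := by
  cases h with
  | lam hM => exact Nat.succ.inj hM.length_eq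
  | app hM hV hle =>
    exact hle.length_eq.trans (length_vadd hM.length_eq ((length_vscale _ _).trans hV.length_eq))
  | force hV => exact hV.length_eq
  | ret hV hle => exact hle.length_eq.trans ((length_vscale _ _).trans hV.length_eq)
  | letin hM hN hle =>
    exact hle.length_eq.trans
      (length_vadd ((length_vscale _ _).trans hM.length_eq) (Nat.succ.inj hN.length_eq))
  | split hV hN hle =>
    exact hle.length_eq.trans (length_vadd ((length_vscale _ _).trans hV.length_eq)
      (Nat.succ.inj (Nat.succ.inj hN.length_eq)))
  | cpair h₁ _ => exact h₁.length_eq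
  | fst hM | snd hM => exact hM.length_eq

end

mutual

theorem VHasTy.of_vle {γ γ' : List Q} {Γ : List (VTy Q)} {V : Val Q} {A : VTy Q}
    (h : VHasTy S γ Γ V A) (hle : vle S γ' γ) : VHasTy S γ' Γ V A := by
  cases h with
  | var hlen hA hq hone hzero =>
    obtain ⟨q', hq', hq'q⟩ := forall₂_exists_getElem?_left hle hq
    refine .var (hle.length_eq.trans hlen) hA hq' (S.le_trans _ _ _ hq'q hone) ?_
    intro i p' hi hp'
    obtain ⟨p, hp, hp'p⟩ := forall₂_exists_getElem?_right hle hp'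
    exact S.le_trans _ _ _ hp'p (hzero i p hi hp)
  | unit hlen hzero => exact .unit (hle.length_eq.trans hlen) (hzero.of_vle hle)
  | thunk hM => exact .thunk (hM.of_vle hle)
  | pair h₁ h₂ hsum => exact .pair h₁ h₂ (hle.trans hsum)

theorem CHasTy.of_vle {γ γ' : List Q} {Γ : List (VTy Q)} {M : Comp Q} {B : CTy Q}
    (h : CHasTy S γ Γ M B) (hle : vle S γ' γ) : CHasTy S γ' Γ M B := by
  cases h with
  | lam hM => exact .lam (hM.of_vle (.cons (S.le_refl _) hle))
  | app hM hV hsum => exact .app hM hV (hle.trans hsum)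
  | force hV => exact .force (hV.of_vle hle)
  | ret hV hscale => exact .ret hV (hle.trans hscale)
  | letin hM hN hsum => exact .letin hM hN (hle.trans hsum)
  | split hV hN hsum => exact .split hV hN (hle.trans hsum)
  | cpair h₁ h₂ => exact .cpair (h₁.of_vle hle) (h₂.of_vle hle)
  | fst hM => exact .fst (hM.of_vle hle)
  | snd hM => exact .snd (hM.of_vle hle)

end

end Subcoeffecting

section Weakening

theorem iterate_liftRen_succ (n x : ℕ) :
    liftRen^[n] Nat.succ x = if x < n then x else x + 1 := by
  induction n generalizing x with
  | zero => rfl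
  | succ n ih =>
    rw [Function.iterate_succ_apply']
    cases x with
    | zero => simp [liftRen]
    | succ x => simp only [liftRen, ih]; split_ifs <;> omega

theorem getElem?_insertIdx_iterate_liftRen {α : Type*} (l : List α) (n x : ℕ) (a : α) :
    (l.insertIdx n a)[liftRen^[n] Nat.succ x]? = l[x]? := by
  rw [iterate_liftRen_succ]
  split_ifs with hx
  · exact List.getElem?_insertIdx_of_lt hx
  · rw [List.getElem?_insertIdx_of_gt (by omega), Nat.add_sub_cancel]

theorem eq_or_exists_iterate_liftRen_of_getElem?_insertIdx {α : Type*} {l : List α} {n i : ℕ}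
    {a b : α} (h : (l.insertIdx n a)[i]? = some b) :
    b = a ∨ ∃ j, i = liftRen^[n] Nat.succ j ∧ l[j]? = some b := by
  rcases lt_trichotomy i n with hlt | rfl | hgt
  · rw [List.getElem?_insertIdx_of_lt hlt] at h
    exact .inr ⟨i, by rw [iterate_liftRen_succ, if_pos hlt], h⟩
  · rw [List.getElem?_insertIdx_self] at h
    exact .inl (by simp_all)
  · rw [List.getElem?_insertIdx_of_gt hgt] at h
    exact .inr ⟨i - 1, by rw [iterate_liftRen_succ, if_neg (by omega)]; omega, h⟩

theorem length_insertIdx_congr {α β : Type*} {l₁ : List α} {l₂ : List β}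
    (h : l₁.length = l₂.length) (n : ℕ) (a : α) (b : β) :
    (l₁.insertIdx n a).length = (l₂.insertIdx n b).length := by
  rw [List.length_insertIdx, List.length_insertIdx, h]

theorem vle.insertIdx_zero_vadd {γ γ₁ γ₂ : List Q} (h : vle S γ (vadd S γ₁ γ₂)) (n : ℕ) :
    vle S (γ.insertIdx n S.zero) (vadd S (γ₁.insertIdx n S.zero) (γ₂.insertIdx n S.zero)) :=
  vadd_insertIdx_zero n γ₁ γ₂ ▸ h.insertIdx_zero n

mutual

theorem VHasTy.weaken {γ : List Q} {Γ : List (VTy Q)} {V : Val Q} {A : VTy Q}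
    (h : VHasTy S γ Γ V A) (n : ℕ) (C : VTy Q) :
    VHasTy S (γ.insertIdx n S.zero) (Γ.insertIdx n C) (V.rename (liftRen^[n] Nat.succ)) A := by
  cases h with
  | var hlen hA hq hone hzero =>
    rw [Val.rename]
    refine .var (length_insertIdx_congr hlen n _ _)
      ((getElem?_insertIdx_iterate_liftRen ..).trans hA)
      ((getElem?_insertIdx_iterate_liftRen ..).trans hq) hone ?_
    intro i p hi hp
    rcases eq_or_exists_iterate_liftRen_of_getElem?_insertIdx hp with rfl | ⟨j, rfl, hj⟩
    · exact S.le_refl _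
    · exact hzero j p (fun hjx => hi (congrArg _ hjx)) hj
  | unit hlen hzero =>
    rw [Val.rename]
    refine .unit (length_insertIdx_congr hlen n _ _) fun p hp => ?_
    rcases List.eq_or_mem_of_mem_insertIdx hp with rfl | hp
    · exact S.le_refl _
    · exact hzero p hp
  | thunk hM => rw [Val.rename]; exact .thunk (hM.weaken n C)
  | pair h₁ h₂ hle =>
    rw [Val.rename]
    exact .pair (h₁.weaken n C) (h₂.weaken n C) (hle.insertIdx_zero_vadd n)

theorem CHasTy.weaken {γ : List Q} {Γ : List (VTy Q)} {M : Comp Q} {B : CTy Q}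
    (h : CHasTy S γ Γ M B) (n : ℕ) (C : VTy Q) :
    CHasTy S (γ.insertIdx n S.zero) (Γ.insertIdx n C) (M.rename (liftRen^[n] Nat.succ)) B := by
  cases h with
  | lam hM =>
    rw [Comp.rename, ← Function.iterate_succ_apply' liftRen]
    exact .lam (hM.weaken (n + 1) C)
  | app hM hV hle =>
    rw [Comp.rename]
    refine .app (hM.weaken n C) (hV.weaken n C) ?_
    rw [vscale_insertIdx_zero]
    exact hle.insertIdx_zero_vadd n
  | force hV => rw [Comp.rename]; exact .force (hV.weaken n C)
  | ret hV hle =>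
    rw [Comp.rename]
    refine .ret (hV.weaken n C) ?_
    rw [vscale_insertIdx_zero]
    exact hle.insertIdx_zero n
  | letin hM hN hle =>
    rw [Comp.rename, ← Function.iterate_succ_apply' liftRen]
    refine .letin (hM.weaken n C) (hN.weaken (n + 1) C) ?_
    rw [vscale_insertIdx_zero]
    exact hle.insertIdx_zero_vadd n
  | split hV hN hle =>
    rw [Comp.rename, ← Function.iterate_succ_apply' liftRen, ← Function.iterate_succ_apply' liftRen]
    refine .split (hV.weaken n C) (hN.weaken (n + 2) C) ?_
    rw [vscale_insertIdx_zero]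
    exact hle.insertIdx_zero_vadd n
  | cpair h₁ h₂ => rw [Comp.rename]; exact .cpair (h₁.weaken n C) (h₂.weaken n C)
  | fst hM => rw [Comp.rename]; exact .fst (hM.weaken n C)
  | snd hM => rw [Comp.rename]; exact .snd (hM.weaken n C)

end

theorem CHasTy.shift {γ : List Q} {Γ : List (VTy Q)} {M : Comp Q} {B : CTy Q}
    (h : CHasTy S γ Γ M B) (C : VTy Q) :
    CHasTy S (S.zero :: γ) (C :: Γ) (shift M) B :=
  h.weaken 0 C

theorem CHasTy.shift1 {γ : List Q} {Γ : List (VTy Q)} {q : Q} {A : VTy Q} {M : Comp Q} {B : CTy Q}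
    (h : CHasTy S (q :: γ) (A :: Γ) M B) (C : VTy Q) :
    CHasTy S (q :: S.zero :: γ) (A :: C :: Γ) (shift1 M) B :=
  h.weaken 1 C

theorem CHasTy.shift2 {γ : List Q} {Γ : List (VTy Q)} {q₁ q₂ : Q} {A₁ A₂ : VTy Q} {M : Comp Q}
    {B : CTy Q} (h : CHasTy S (q₂ :: q₁ :: γ) (A₂ :: A₁ :: Γ) M B) (C : VTy Q) :
    CHasTy S (q₂ :: q₁ :: S.zero :: γ) (A₂ :: A₁ :: C :: Γ) (shift2 M) B :=
  h.weaken 2 C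

end Weakening

section DerivedRules

variable {γ γ₁ γ₂ : List Q} {Γ : List (VTy Q)} {A : VTy Q} {B : CTy Q} {M N : Comp Q} {V : Val Q}
  {q q₁ q₂ : Q}

theorem VHasTy.var_zero (Γ : List (VTy Q)) (A : VTy Q) :
    VHasTy S (S.one :: zeroVec S Γ.length) (A :: Γ) (.var 0) A := by
  refine .var (by simp) rfl rfl (S.le_refl _) ?_
  rintro (_ | i) p hi hp
  · exact absurd rfl hi
  · rw [List.eq_of_mem_replicate (List.mem_of_getElem? hp)]
    exact S.le_refl _

theorem VHasTy.var_one (Γ : List (VTy Q)) (A C : VTy Q) :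
    VHasTy S (S.zero :: S.one :: zeroVec S Γ.length) (C :: A :: Γ) (.var 1) A := by
  have h := (VHasTy.var_zero (S := S) Γ A).weaken 0 C
  rwa [Val.rename] at h

theorem CHasTy.app_one (hM : CHasTy S γ₁ Γ M (.arr A S.one B)) (hV : VHasTy S γ₂ Γ V A) :
    CHasTy S (vadd S γ₁ γ₂) Γ (.app M V) B :=
  .app hM hV (vle_of_eq (by rw [vscale_one]))

theorem CHasTy.ret_one (hV : VHasTy S γ Γ V A) : CHasTy S γ Γ (.ret S.one V) (.F S.one A) :=
  .ret hV (vle_of_eq (vscale_one γ).symm)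

theorem CHasTy.letin_one (hM : CHasTy S γ₁ Γ M (.F q A)) (hN : CHasTy S (q :: γ₂) (A :: Γ) N B) :
    CHasTy S (vadd S γ₁ γ₂) Γ (.letin S.one M N) B :=
  .letin hM ((S.mul_one q).symm ▸ hN) (vle_of_eq (by rw [vscale_one]))

theorem CHasTy.letin_ret_thunk_ret (hV : VHasTy S γ₁ Γ V A)
    (hN : CHasTy S (S.one :: γ₂) (.thunk (.F q A) :: Γ) N B) :
    CHasTy S (vadd S (vscale S q γ₁) γ₂) Γ
      (.letin S.one (.ret S.one (.thunk (.ret q V))) N) B :=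
  letin_one (ret_one (.thunk (.ret hV (vle_refl _)))) hN

theorem CHasTy.extract (hM : CHasTy S γ Γ M (.F q (.thunk B))) (hq : S.le q S.one) :
    CHasTy S γ Γ (.letin S.one M (.force (.var 0))) B := by
  have hforce : CHasTy S (q :: zeroVec S Γ.length) (.thunk B :: Γ) (.force (.var 0)) B :=
    .force ((VHasTy.var_zero Γ _).of_vle (.cons hq (vle_refl _)))
  simpa only [vadd_zeroVec hM.length_eq] using letin_one hM hforce

theorem CHasTy.discard (hM : CHasTy S γ₁ Γ M (.F q A)) (hq : S.le q S.zero)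
    (hN : CHasTy S γ₂ Γ N B) :
    CHasTy S (vadd S γ₁ γ₂) Γ (.letin S.one M (CBPVCo.shift N)) B :=
  letin_one hM ((hN.shift A).of_vle (.cons hq (vle_refl _)))

theorem CHasTy.extend (hM : CHasTy S γ₁ Γ M (.F q₁ A)) (hq : S.le q₁ (S.mul q q₂))
    (hN : CHasTy S (S.one :: γ₂) (.thunk (.F q₂ A) :: Γ) N B) :
    CHasTy S (vadd S γ₁ (vscale S q γ₂)) Γ
      (.letin S.one M (.ret q (.thunk (.letin S.one (.ret S.one (.thunk (.ret q₂ (.var 0))))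
        (CBPVCo.shift1 N)))))
      (.F q (.thunk B)) := by
  have hlen : γ₂.length = Γ.length := Nat.succ.inj hN.length_eq
  have hbody := letin_ret_thunk_ret (VHasTy.var_zero Γ A) (hN.shift1 A)
  simp only [vscale_cons, vadd_cons_cons, S.mul_one, S.add_zero, vscale_zeroVec,
    zeroVec_vadd hlen] at hbody
  exact letin_one hM (.ret (.thunk hbody) (.cons hq (vle_refl _)))

theorem CHasTy.divide (hM : CHasTy S γ₁ Γ M (.F q A)) (hq : S.le q (S.add q₁ q₂))
    (hN : CHasTy S (S.one :: S.one :: γ₂) (.thunk (.F q₂ A) :: .thunk (.F q₁ A) :: Γ) N B) :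
    CHasTy S (vadd S γ₁ γ₂) Γ
      (.letin S.one M (.letin S.one (.ret S.one (.thunk (.ret q₁ (.var 0))))
        (.letin S.one (.ret S.one (.thunk (.ret q₂ (.var 1)))) (CBPVCo.shift2 N)))) B := by
  have hlen : γ₂.length = Γ.length := Nat.succ.inj (Nat.succ.inj hN.length_eq)
  have hsecond := letin_ret_thunk_ret (VHasTy.var_one Γ A _) (hN.shift2 A)
  simp only [vscale_cons, vadd_cons_cons, S.mul_zero, S.mul_one, S.zero_add, S.add_zero,
    vscale_zeroVec, zeroVec_vadd hlen] at hsecond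
  have hfirst := letin_ret_thunk_ret (VHasTy.var_zero Γ A) hsecond
  simp only [vscale_cons, vadd_cons_cons, S.mul_one, vscale_zeroVec, zeroVec_vadd hlen] at hfirst
  exact letin_one hM (hfirst.of_vle (.cons hq (vle_refl _)))

end DerivedRules

end CBPVCo

section ContextTranslation

variable {Q : Type} {S : CoSig Q} {Γ Γ₁ Γ₂ : LCtx Q} {Δ : List (VTy Q)}

/-- `Δ` is a CBN translation of the linear context `Γ`: every live assumption `x : τ` becomes
`x : U ⟦τ⟧n`, while a consumed position may carry any value type. -/
def CtxTransN (S : CoSig Q) (Γ : LCtx Q) (Δ : List (VTy Q)) : Prop :=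
  List.Forall₂ (fun o A => ∀ τ ∈ o, A = .thunk (tyTransN S τ)) Γ Δ

theorem ctxTransN_map_ctxTyN (Γ : LCtx Q) : CtxTransN S Γ (Γ.map (ctxTyN S)) :=
  List.forall₂_map_right_iff.2 (List.forall₂_same.2 fun o _ τ hτ => by
    rw [Option.mem_def.1 hτ, ctxTyN])

theorem CtxTransN.cons_some (h : CtxTransN S Γ Δ) (τ : LTy Q) :
    CtxTransN S (some τ :: Γ) (.thunk (tyTransN S τ) :: Δ) :=
  .cons (fun τ' hτ' => by rw [Option.some.inj hτ']) h

theorem CtxTransN.map_none (h : CtxTransN S Γ Δ) : CtxTransN S (Γ.map fun _ => none) Δ :=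
  List.forall₂_map_left_iff.2 (h.imp fun _ _ _ _ hτ => absurd hτ (Option.not_mem_none _))

theorem CtxTransN.getElem? (h : CtxTransN S Γ Δ) {x : ℕ} {τ : LTy Q}
    (hx : Γ[x]? = some (some τ)) : Δ[x]? = some (.thunk (tyTransN S τ)) := by
  obtain ⟨A, hA, hτ⟩ := forall₂_exists_getElem?_right h hx
  rw [hA, hτ τ rfl]

theorem CtxTransN.length_map_ctxGrade (h : CtxTransN S Γ Δ) :
    (Γ.map (ctxGrade S)).length = Δ.length :=
  (List.length_map _).trans h.length_eq

theorem LamCom.Split.symm (s : Split Γ Γ₁ Γ₂) : Split Γ Γ₂ Γ₁ := by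
  induction s with
  | nil => exact .nil
  | left _ ih => exact .right ih
  | right _ ih => exact .left ih
  | none _ ih => exact .none ih

theorem LamCom.Split.ctxTransN_left (s : Split Γ Γ₁ Γ₂) (h : CtxTransN S Γ Δ) :
    CtxTransN S Γ₁ Δ := by
  unfold CtxTransN at *
  induction s generalizing Δ with
  | nil => exact h
  | left _ ih | none _ ih =>
    cases h with
    | cons hd tl => exact .cons hd (ih tl)
  | right _ ih =>
    cases h with
    | cons _ tl => exact .cons (fun _ hτ => absurd hτ (Option.not_mem_none _)) (ih tl)

theorem LamCom.Split.ctxTransN_right (s : Split Γ Γ₁ Γ₂) (h : CtxTransN S Γ Δ) :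
    CtxTransN S Γ₂ Δ :=
  s.symm.ctxTransN_left h

theorem LamCom.Split.vadd_map_ctxGrade (s : Split Γ Γ₁ Γ₂) :
    vadd S (Γ₁.map (ctxGrade S)) (Γ₂.map (ctxGrade S)) = Γ.map (ctxGrade S) := by
  induction s with
  | nil => rfl
  | left _ ih | right _ ih | none _ ih =>
    simp only [List.map_cons, vadd_cons_cons, ctxGrade, S.add_zero, S.zero_add, ih]

theorem map_ctxGrade_map_none (Γ : LCtx Q) :
    (Γ.map fun _ => none).map (ctxGrade S) = zeroVec S Γ.length := by
  simp only [List.map_const', List.map_replicate, ctxGrade]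

theorem leZero_map_ctxGrade (h : ∀ o ∈ Γ, o = none) : leZero S (Γ.map (ctxGrade S)) := by
  rintro _ hq
  obtain ⟨o, ho, rfl⟩ := List.mem_map.1 hq
  rw [h o ho]
  exact S.le_refl _

theorem CtxTransN.vHasTy_var (h : CtxTransN S Γ Δ) {x : ℕ} {τ : LTy Q}
    (hx : Γ[x]? = some (some τ)) (hdead : ∀ i o, i ≠ x → Γ[i]? = some o → o = none) :
    VHasTy S (Γ.map (ctxGrade S)) Δ (.var x) (.thunk (tyTransN S τ)) := by
  refine .var h.length_map_ctxGrade (h.getElem? hx) (q := S.one)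
    (by simp only [List.getElem?_map, hx, Option.map_some, ctxGrade]) (S.le_refl _) ?_
  intro i q hi hq
  rw [List.getElem?_map, Option.map_eq_some_iff] at hq
  obtain ⟨o, ho, rfl⟩ := hq
  rw [hdead i o hi ho]
  exact S.le_refl _

end ContextTranslation

theorem comonadic_cbn_translation_preservation_general {Q : Type} (S : CoSig Q)
    {Γ : LCtx Q} {e : LTm Q} {τ : LTy Q} (h : LamCom.HasTy S Γ e τ)
    {Δ : List (VTy Q)} (hΔ : CtxTransN S Γ Δ) :
    CHasTy S (Γ.map (ctxGrade S)) Δ (tmTransN S e) (tyTransN S τ) := by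
  induction h generalizing Δ with
  | var hx hdead => exact .force (hΔ.vHasTy_var hx hdead)
  | lam _ ih => exact .lam (ih (hΔ.cons_some _))
  | app s _ _ ih₁ ih₂ =>
    rw [← s.vadd_map_ctxGrade]
    exact (ih₁ (s.ctxTransN_left hΔ)).app_one (.thunk (ih₂ (s.ctxTransN_right hΔ)))
  | unit hdead => exact .ret_one (.unit hΔ.length_map_ctxGrade (leZero_map_ctxGrade hdead))
  | extract _ hq ih => exact (ih hΔ).extract hq
  | extend _ hq _ ih₁ ih₂ =>
    have hext := (ih₁ hΔ).extend hq (ih₂ (hΔ.map_none.cons_some _))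
    rwa [map_ctxGrade_map_none, vscale_zeroVec, vadd_zeroVec (List.length_map _)] at hext
  | divide s _ hq _ ih₁ ih₂ =>
    rw [← s.vadd_map_ctxGrade]
    exact (ih₁ (s.ctxTransN_left hΔ)).divide hq
      (ih₂ (((s.ctxTransN_right hΔ).cons_some _).cons_some _))
  | discard s _ hq _ ih₁ ih₂ =>
    rw [← s.vadd_map_ctxGrade]
    exact (ih₁ (s.ctxTransN_left hΔ)).discard hq (ih₂ (s.ctxTransN_right hΔ))

/-- Type preservation of the CBN translation of the comonadic linear
λ-calculus: if `Γ ⊢_com e : τ`, then `⟦Γ⟧n ⊢ ⟦e⟧n : ⟦τ⟧n` in CBPV with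
coeffects, where every live assumption is used at grade `1`. -/
theorem comonadic_cbn_translation_preservation {Q : Type} (S : CoSig Q)
    {Γ : LCtx Q} {e : LTm Q} {τ : LTy Q} (h : LamCom.HasTy S Γ e τ) :
    CHasTy S (Γ.map (ctxGrade S)) (Γ.map (ctxTyN S)) (tmTransN S e) (tyTransN S τ) := by
  exact comonadic_cbn_translation_preservation_general S h (ctxTransN_map_ctxTyN Γ)
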